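/- arXiv:2311.09995 — 4 statements merged into one kernel-verified Lean document; each statement's English description precedes it below -/
import Mathlib

section
/- For every real θ with sin(2θ) ≠ 0 and every natural number m, the average success probability of a uniformly random number of Grover iterations satisfies the identity (1/(m+1)) · Σ_{j=0}^{m} sin²((2j+1)θ) = 1/2 − sin(4(m+1)θ) / (4(m+1)·sin(2θ)). -/
/-!
Multiplying the sum by `4 sin 2θ` makes it telescope: with `a = (2j+1)θ`,
`4 sin 2θ sin² a = 2 sin 2θ - 2 sin 2θ cos 2a`, and
`2 sin 2θ cos 2a = sin (2a + 2θ) - sin (2a - 2θ) = sin (4(j+1)θ) - sin (4jθ)`.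
Dividing by `4 (m+1) sin 2θ ≠ 0` gives the average.
-/

/-- The telescoped sum, free of division and hence valid for every `θ`. -/
lemma four_sin_mul_sum_sin_sq (θ : ℝ) (n : ℕ) :
    4 * Real.sin (2 * θ) * ∑ j ∈ Finset.range n, Real.sin ((2 * (j : ℝ) + 1) * θ) ^ 2 =
      2 * n * Real.sin (2 * θ) - Real.sin (4 * (n : ℝ) * θ) := by
  induction n with
  | zero => simp
  | succ n ih =>
    rw [Finset.sum_range_succ, mul_add, ih]
    push_cast
    have h1 : 4 * ((n : ℝ) + 1) * θ = 2 * ((2 * (n : ℝ) + 1) * θ) + 2 * θ := by ring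
    have h2 : 4 * (n : ℝ) * θ = 2 * ((2 * (n : ℝ) + 1) * θ) - 2 * θ := by ring
    rw [h1, h2, Real.sin_add, Real.sin_sub, Real.cos_two_mul ((2 * (n : ℝ) + 1) * θ),
      Real.cos_sq']
    ring

/-- In QSearch, after `j` applications of the Grover operator the probability of
measuring a good element is `p_j = sin²((2j+1)θ)`; the average of `p_j` over `j`
drawn uniformly from `{0, 1, ..., m}` equals
`1/2 − sin(4(m+1)θ) / (4(m+1)·sin(2θ))`. -/
theorem qsearch_average_success_probability (θ : ℝ) (hθ : Real.sin (2 * θ) ≠ 0) (m : ℕ) :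
    (1 / ((m : ℝ) + 1)) * ∑ j ∈ Finset.range (m + 1), Real.sin ((2 * (j : ℝ) + 1) * θ) ^ 2 =
      1 / 2 - Real.sin (4 * ((m : ℝ) + 1) * θ) / (4 * ((m : ℝ) + 1) * Real.sin (2 * θ)) := by
  have h := four_sin_mul_sum_sin_sq θ (m + 1)
  push_cast at h
  have hm : (m : ℝ) + 1 ≠ 0 := by positivity
  have hS : ∑ j ∈ Finset.range (m + 1), Real.sin ((2 * (j : ℝ) + 1) * θ) ^ 2 =
      (2 * ((m : ℝ) + 1) * Real.sin (2 * θ) - Real.sin (4 * ((m : ℝ) + 1) * θ)) /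
        (4 * Real.sin (2 * θ)) := by
    rw [← h, mul_div_cancel_left₀ _ (mul_ne_zero four_ne_zero hθ)]
  rw [hS]
  -- Hiding the sines keeps their arguments from being normalized differently on each side.
  generalize Real.sin (4 * ((m : ℝ) + 1) * θ) = t
  generalize Real.sin (2 * θ) = s at hθ ⊢
  field_simp
  ring
end

section
/- For every natural number T ≥ 1 and every real x with 0 < |x| ≤ 1/2, one has (1/T²) · (1 − cos(2πTx)) / (1 − cos(2πx)) ≤ 1 / (4·(Tx)²). -/
/-! The numerator `1 - cos (2πTx)` is at most `2`, and since `|2πx| ≤ π`, Jordan's inequality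
bounds the denominator `1 - cos (2πx)` below by `8x²`. The ratio is therefore at most
`1 / (4x²)`. -/

/-- In quantum phase estimation with a `T`-dimensional clock register, the
probability of measuring clock value `K` when the true phase is `φ` is
`p_K = (1/T²)·(1 − cos(2πTx))/(1 − cos(2πx))` with `x = φ − K/T`; for
`0 < |x| ≤ 1/2` this is bounded by `1/(4·(Tx)²)`. -/
theorem qpe_tail_probability_bound (T : ℕ) (hT : 1 ≤ T) (x : ℝ)
    (hx0 : 0 < |x|) (hx : |x| ≤ 1 / 2) :
    (1 / (T : ℝ) ^ 2) *
        ((1 - Real.cos (2 * Real.pi * (T : ℝ) * x)) / (1 - Real.cos (2 * Real.pi * x))) ≤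
      1 / (4 * ((T : ℝ) * x) ^ 2) := by
  have hxne : x ≠ 0 := abs_pos.mp hx0
  have hxsq : 0 < x ^ 2 := by positivity
  have hTpos : (0 : ℝ) < T := by exact_mod_cast hT
  have habs : |2 * Real.pi * x| ≤ Real.pi := by
    rw [abs_mul, abs_of_pos Real.two_pi_pos]
    nlinarith [Real.pi_pos]
  -- Jordan's inequality `2 / π * t ≤ sin t` in its form for `1 - cos (2 * t)`.
  have hden : 8 * x ^ 2 ≤ 1 - Real.cos (2 * Real.pi * x) := by
    have h := Real.cos_le_one_sub_mul_cos_sq habs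
    have e : 2 / Real.pi ^ 2 * (2 * Real.pi * x) ^ 2 = 8 * x ^ 2 := by
      field_simp
      norm_num
    linarith
  have hnum : 1 - Real.cos (2 * Real.pi * (T : ℝ) * x) ≤ 2 := by
    linarith [Real.neg_one_le_cos (2 * Real.pi * (T : ℝ) * x)]
  calc (1 / (T : ℝ) ^ 2) *
        ((1 - Real.cos (2 * Real.pi * (T : ℝ) * x)) / (1 - Real.cos (2 * Real.pi * x)))
      ≤ (1 / (T : ℝ) ^ 2) * (2 / (8 * x ^ 2)) := by gcongr
    _ = 1 / (4 * ((T : ℝ) * x) ^ 2) := by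
      field_simp
      norm_num
end

section
/- For every real θ with 0 < θ ≤ π/2, setting m = ⌊π/(4θ)⌋, one has cos²((2m+1)θ) ≤ sin²θ. In particular, quantum amplitude amplification with m = ⌊π/(4θ)⌋ Grover iterations succeeds with probability at least max(1 − p, p), where p = sin²θ. -/
/-!
Put `d = π/2 - (2m+1)θ`. The choice `m = ⌊π/(4θ)⌋` gives `2mθ ≤ π/2 < 2(m+1)θ`, that is `|d| ≤ θ`,
so `|cos((2m+1)θ)| = |sin d| ≤ sin θ` because `sin` is odd and increasing on `[-π/2, π/2]`.
This bounds the success probability below by `1 - p`. For the bound by `p`: if `θ ≤ π/4` then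
`p ≤ 1 - p`; otherwise `m = 0` and the success probability equals `p`.
-/

/-- In quantum amplitude amplification, the initial state has success
probability `p = sin²θ`, and after `m = ⌊π/(4θ)⌋` Grover iterations the failure
probability `cos²((2m+1)θ)` is at most `sin²θ`; in particular the success
probability `sin²((2m+1)θ)` is at least `max(1 − p, p)`. -/
theorem qaa_success_probability (θ : ℝ) (hθ₀ : 0 < θ) (hθ₁ : θ ≤ Real.pi / 2)
    (m : ℕ) (hm : m = ⌊Real.pi / (4 * θ)⌋₊) :
    Real.cos ((2 * (m : ℝ) + 1) * θ) ^ 2 ≤ Real.sin θ ^ 2 ∧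
      Real.sin ((2 * (m : ℝ) + 1) * θ) ^ 2 ≥
        max (1 - Real.sin θ ^ 2) (Real.sin θ ^ 2) := by
  have h4 : 0 < 4 * θ := by linarith
  have hlo : (m : ℝ) * (4 * θ) ≤ Real.pi := by
    rw [← le_div_iff₀ h4, hm]
    exact Nat.floor_le (by positivity)
  have hhi : Real.pi < ((m : ℝ) + 1) * (4 * θ) := by
    rw [← div_lt_iff₀ h4, hm]
    exact Nat.lt_floor_add_one _
  have hfail : Real.cos ((2 * (m : ℝ) + 1) * θ) ^ 2 ≤ Real.sin θ ^ 2 := by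
    rw [← Real.sin_pi_div_two_sub]
    apply sq_le_sq'
    · rw [← Real.sin_neg]
      apply Real.sin_le_sin_of_le_of_le_pi_div_two <;> linarith
    · apply Real.sin_le_sin_of_le_of_le_pi_div_two <;> linarith
  have hsucc := Real.sin_sq_add_cos_sq ((2 * (m : ℝ) + 1) * θ)
  refine ⟨hfail, max_le (by linarith) ?_⟩
  rcases le_or_gt θ (Real.pi / 4) with h | h
  · have hsc : Real.sin θ ≤ Real.cos θ := by
      rw [← Real.sin_pi_div_two_sub]
      apply Real.sin_le_sin_of_le_of_le_pi_div_two <;> linarith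
    have hs : 0 ≤ Real.sin θ := Real.sin_nonneg_of_nonneg_of_le_pi hθ₀.le (by linarith)
    have hsq : Real.sin θ ^ 2 ≤ Real.cos θ ^ 2 := pow_le_pow_left₀ hs hsc 2
    linarith [Real.sin_sq_add_cos_sq θ]
  · have hm0 : m = 0 := by
      rw [hm, Nat.floor_eq_zero, div_lt_one h4]
      linarith
    simp [hm0]
end

section
/- For every nonzero real x, (i/√(2π)) · ∫_0^∞ ( ∫_ℝ z·e^{−z²/2}·e^{−i x y z} dz ) dy = 1/x. -/
open MeasureTheory

/-!
Put `t = x y` and `G(z) = e^{-z²/2} e^{-itz}`. Since `G' = -z G - i t G` and `G`, `G'` are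
integrable, `∫ G' = 0`, so the inner integral is `∫ z G = -i t ∫ G`, and `∫ G` is the Fourier
transform of the Gaussian, `√(2π) e^{-t²/2}` (`integral_id_mul_gaussian_mul_char`). The outer
integral is then the elementary `∫₀^∞ y e^{-x²y²/2} dy = 1/x²`.
-/

theorem integrable_gaussian_mul_char (t : ℝ) :
    Integrable fun z : ℝ =>
      Complex.exp (-(z : ℂ) ^ 2 / 2) * Complex.exp (-Complex.I * t * z) := by
  have h := integrable_cexp_quadratic (b := 1 / 2) (by norm_num) (-Complex.I * t) 0
  refine h.congr (Filter.Eventually.of_forall fun z => ?_)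
  simp only [← Complex.exp_add]
  congr 1
  ring

theorem integrable_id_mul_gaussian_mul_char (t : ℝ) :
    Integrable fun z : ℝ =>
      (z : ℂ) * Complex.exp (-(z : ℂ) ^ 2 / 2) * Complex.exp (-Complex.I * t * z) := by
  have h := integrable_mul_cexp_neg_mul_sq (b := 1 / 2) (by norm_num)
  -- The character has modulus one, so it does not affect integrability.
  refine (h.mul_bdd (c := 1) (g := fun z : ℝ => Complex.exp (-Complex.I * t * z))
    (Continuous.aestronglyMeasurable (by fun_prop))
    (Filter.Eventually.of_forall fun z => ?_)).congr (Filter.Eventually.of_forall fun z => ?_)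
  · simp [Complex.norm_exp]
  · simp only
    congr 3
    ring

theorem integral_gaussian_mul_char (t : ℝ) :
    ∫ z : ℝ, Complex.exp (-(z : ℂ) ^ 2 / 2) * Complex.exp (-Complex.I * t * z) =
      (Real.sqrt (2 * Real.pi) : ℂ) * Complex.exp (-(t : ℂ) ^ 2 / 2) := by
  have h := fourierIntegral_gaussian (b := 1 / 2) (by norm_num) (-t : ℂ)
  have hs : ((Real.pi : ℂ) / (1 / 2)) ^ (1 / 2 : ℂ) = (Real.sqrt (2 * Real.pi) : ℂ) := by
    rw [Real.sqrt_eq_rpow, Complex.ofReal_cpow (by positivity)]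
    push_cast
    congr 1
    ring
  rw [hs] at h
  convert h using 2
  · ext z
    rw [mul_comm]
    congr 2 <;> ring
  · congr 1
    ring

/-- Integration by parts moves the factor `z` onto the character, as a factor `-i t`. -/
theorem integral_id_mul_gaussian_mul_char (t : ℝ) :
    ∫ z : ℝ, (z : ℂ) * Complex.exp (-(z : ℂ) ^ 2 / 2) * Complex.exp (-Complex.I * t * z) =
      -Complex.I * t * (Real.sqrt (2 * Real.pi) * Complex.exp (-(t : ℂ) ^ 2 / 2)) := by
  have hG := integrable_gaussian_mul_char t
  have hzG := integrable_id_mul_gaussian_mul_char t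
  have hd : ∀ z : ℝ, HasDerivAt
      (fun z : ℝ => Complex.exp (-(z : ℂ) ^ 2 / 2) * Complex.exp (-Complex.I * t * z))
      (-Complex.I * t * (Complex.exp (-(z : ℂ) ^ 2 / 2) * Complex.exp (-Complex.I * t * z)) -
        (z : ℂ) * Complex.exp (-(z : ℂ) ^ 2 / 2) * Complex.exp (-Complex.I * t * z)) z := by
    intro z
    have h1 := ((((hasDerivAt_id (z : ℂ)).pow 2).neg.div_const 2).cexp.mul
      ((hasDerivAt_id (z : ℂ)).const_mul (-Complex.I * t)).cexp).comp_ofReal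
    refine HasDerivAt.congr_deriv h1 ?_
    simp only [Pi.neg_apply, Pi.pow_apply, id_eq]
    push_cast
    ring
  have h0 := integral_eq_zero_of_hasDerivAt_of_integrable hd ((hG.const_mul _).sub hzG) hG
  rw [integral_sub (hG.const_mul _) hzG, integral_const_mul, integral_gaussian_mul_char] at h0
  exact (sub_eq_zero.mp h0).symm

/-- Integral representation of `1/x` that is the starting point of the Fourier
approach to the quantum linear systems algorithm of Childs–Kothari–Somma:
`(i/√(2π)) · ∫_0^∞ ∫_ℝ z·e^{−z²/2}·e^{−ixyz} dz dy = 1/x` for `x ≠ 0`. -/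
theorem inverse_fourier_integral_representation (x : ℝ) (hx : x ≠ 0) :
    (Complex.I / Real.sqrt (2 * Real.pi)) *
        ∫ y in Set.Ioi (0 : ℝ),
          ∫ z : ℝ, (z : ℂ) * Complex.exp (-(z : ℂ) ^ 2 / 2) *
            Complex.exp (-Complex.I * x * y * z) =
      1 / (x : ℂ) := by
  have hinner : ∀ y : ℝ, ∫ z : ℝ, (z : ℂ) * Complex.exp (-(z : ℂ) ^ 2 / 2) *
      Complex.exp (-Complex.I * x * y * z) =
      (-Complex.I * x * Real.sqrt (2 * Real.pi)) *
        ((y : ℂ) * Complex.exp (-((x ^ 2 / 2 : ℝ) : ℂ) * (y : ℂ) ^ 2)) := by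
    intro y
    have h := integral_id_mul_gaussian_mul_char (x * y)
    push_cast at h ⊢
    simp only [← mul_assoc] at h ⊢
    rw [h, show -((x : ℂ) * y) ^ 2 / 2 = -((x : ℂ) ^ 2 / 2) * (y : ℂ) ^ 2 by ring]
    ring
  have hb : 0 < (((x ^ 2 / 2 : ℝ) : ℂ)).re := by
    rw [Complex.ofReal_re]
    positivity
  simp_rw [hinner]
  rw [integral_const_mul, integral_mul_cexp_neg_mul_sq hb]
  have hs : (Real.sqrt (2 * Real.pi) : ℂ) ≠ 0 := by
    rw [Complex.ofReal_ne_zero]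
    positivity
  have hx' : (x : ℂ) ≠ 0 := Complex.ofReal_ne_zero.mpr hx
  push_cast
  field_simp
  simp
end
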